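/- Let G = (V,E) be a finite connected simple undirected non-bipartite graph with minimum degree at least 2 which is not a cycle (equivalently, |E| > |V|), with adjacency matrix A, and let T be the adjacency matrix of the oriented line graph of G (the Hashimoto matrix). Then the eigenspace of T for the eigenvalue -1, i.e. the space of vectors s on directed edges with T s = -s, has dimension exactly |E| - |V|. -/

import Mathlib

open Matrix Finset

/-! Write `F v` for the sum of `s` over the directed edges leaving `v`. Since
`(T s)(u, v) = F v - s (v, u)`, the equation `T s = -s` says `F v = s (v, u) - s (u, v)` on every
directed edge, so `F` changes sign along every edge. An odd closed walk through `v` then gives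
`F v = -F v`, so `F = 0` and `s` is symmetric: `s` is a function on the undirected edges in the
kernel of the vertex-edge incidence matrix. The same sign argument, applied to the left kernel,
shows that this matrix has rank `|V|`. -/

section AlternatingFunctions

variable {V R : Type*} {G : SimpleGraph V}

theorem exists_adj_mem_iff_notMem_of_isBipartite (hbip : G.IsBipartite) :
    ∃ X : Set V, ∀ ⦃u v : V⦄, G.Adj u v → (u ∈ X ↔ v ∉ X) := by
  obtain ⟨X, Y, hXY⟩ := hbip.exists_isBipartiteWith
  refine ⟨X, fun u v huv ↦ ?_⟩
  rcases hXY.mem_of_adj huv with ⟨hu, hv⟩ | ⟨hu, hv⟩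
  · exact iff_of_true hu (hXY.disjoint.notMem_of_mem_right hv)
  · exact iff_of_false (hXY.disjoint.notMem_of_mem_right hu) (not_not_intro hv)

theorem exists_odd_closed_walk (hconn : G.Preconnected) (hnonbip : ¬G.IsBipartite) (v : V) :
    ∃ p : G.Walk v v, Odd p.length := by
  rw [SimpleGraph.IsBipartite, SimpleGraph.two_colorable_iff_forall_loop_even] at hnonbip
  push Not at hnonbip
  obtain ⟨u, c, hc⟩ := hnonbip
  obtain ⟨p⟩ := hconn v u
  refine ⟨(p.append c).append p.reverse, ?_⟩
  simp only [SimpleGraph.Walk.length_append, SimpleGraph.Walk.length_reverse]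
  grind

theorem eq_neg_one_pow_length_mul [Ring R] {f : V → R}
    (hf : ∀ ⦃u v⦄, G.Adj u v → f u = -f v) {u v : V} (p : G.Walk u v) :
    f u = (-1) ^ p.length * f v := by
  induction p with
  | nil => simp
  | cons huv _ ih =>
    rw [hf huv, ih, SimpleGraph.Walk.length_cons, pow_succ', mul_assoc, neg_one_mul]

theorem eq_zero_of_adj_eq_neg [Ring R] [NoZeroDivisors R] [NeZero (2 : R)]
    (hodd : ∀ v, ∃ p : G.Walk v v, Odd p.length) {f : V → R}
    (hf : ∀ ⦃u v⦄, G.Adj u v → f u = -f v) : f = 0 := by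
  funext v
  obtain ⟨p, hp⟩ := hodd v
  have hneg : f v = -f v := by simpa [hp.neg_one_pow] using eq_neg_one_pow_length_mul hf p
  have htwo : 2 * f v = 0 := by rw [two_mul, ← eq_neg_iff_add_eq_zero]; exact hneg
  exact (mul_eq_zero.mp htwo).resolve_left two_ne_zero

end AlternatingFunctions

section DartFunctions

variable {V : Type*} {G : SimpleGraph V}

/-- The undirected edge underlying a dart, bundled as an element of the edge set. -/
def dartEdge (d : G.Dart) : G.edgeSet :=
  ⟨d.edge, d.edge_mem⟩

theorem dartEdge_surjective : Function.Surjective (dartEdge : G.Dart → G.edgeSet) := by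
  rintro ⟨⟨u, v⟩, huv⟩
  exact ⟨⟨(u, v), huv⟩, rfl⟩

theorem mem_dartEdge_iff {v : V} {d : G.Dart} :
    v ∈ (dartEdge d).1 ↔ v = d.fst ∨ v = d.snd :=
  Sym2.mem_iff

theorem dartEdge_injOn_fst_eq (v : V) : Set.InjOn dartEdge {d : G.Dart | d.fst = v} := by
  rintro d hd e he hde
  rcases (SimpleGraph.dart_edge_eq_iff d e).mp (congrArg Subtype.val hde) with heq | rfl
  · exact heq
  · exact absurd (he.trans hd.symm) e.fst_ne_snd

theorem exists_fst_eq_dartEdge_eq_iff {v : V} {e : G.edgeSet} :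
    (∃ d : G.Dart, d.fst = v ∧ dartEdge d = e) ↔ v ∈ e.1 := by
  constructor
  · rintro ⟨d, rfl, rfl⟩
    exact Sym2.mem_mk_left _ _
  · obtain ⟨e, he⟩ := e
    rintro ⟨w, rfl⟩
    exact ⟨⟨(v, w), he⟩, rfl, rfl⟩

theorem exists_comp_dartEdge_eq_iff {α : Type*} {s : G.Dart → α} :
    (∃ t : G.edgeSet → α, t ∘ dartEdge = s) ↔ ∀ d, s d.symm = s d := by
  constructor
  · rintro ⟨t, rfl⟩ d
    exact congrArg t (Subtype.ext d.edge_symm)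
  · intro hsymm
    refine ⟨s ∘ Function.surjInv dartEdge_surjective, funext fun d ↦ ?_⟩
    have hedge : (Function.surjInv dartEdge_surjective (dartEdge d)).edge = d.edge :=
      congrArg Subtype.val (Function.surjInv_eq dartEdge_surjective (dartEdge d))
    rcases (SimpleGraph.dart_edge_eq_iff _ _).mp hedge with heq | heq
    · exact congrArg s heq
    · exact (congrArg s heq).trans (hsymm d)

variable [Fintype V] [DecidableEq V] [DecidableRel G.Adj]

/-- The outflow of a function on darts at a vertex: the sum of its values on the darts leaving
that vertex. -/
def outflow {M : Type*} [AddCommMonoid M] (s : G.Dart → M) (v : V) : M :=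
  ∑ d : G.Dart with d.fst = v, s d

end DartFunctions

section IncidenceMatrix

variable {V : Type*} (R : Type*) (G : SimpleGraph V) [DecidableEq V] [DecidableRel G.Adj]

/-- The vertex-edge incidence matrix with one column for each edge. `SimpleGraph.incMatrix` has in
addition a zero column for every other element of `Sym2 V`, which would enlarge the kernel. -/
def edgeIncMatrix [Zero R] [One R] : Matrix V G.edgeSet R :=
  (G.incMatrix R).submatrix id Subtype.val

variable {R G}

theorem edgeIncMatrix_apply [Zero R] [One R] (v : V) (e : G.edgeSet) :
    edgeIncMatrix R G v e = if v ∈ e.1 then 1 else 0 := by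
  simp only [edgeIncMatrix, submatrix_apply, id_eq, SimpleGraph.incMatrix_apply',
    SimpleGraph.incidenceSet, Set.mem_sep_iff, e.2, true_and]

variable [Fintype V]

theorem vecMul_edgeIncMatrix_dartEdge [NonAssocSemiring R] (f : V → R) (d : G.Dart) :
    (f ᵥ* edgeIncMatrix R G) (dartEdge d) = f d.fst + f d.snd := by
  have hends : ({v | v = d.fst ∨ v = d.snd} : Finset V) = {d.fst, d.snd} := by ext; simp
  simp only [vecMul, dotProduct, edgeIncMatrix_apply, mem_dartEdge_iff, mul_ite, mul_one, mul_zero]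
  rw [← sum_filter, hends, sum_pair d.fst_ne_snd]

theorem edgeIncMatrix_mulVec [NonAssocSemiring R] (t : G.edgeSet → R) :
    edgeIncMatrix R G *ᵥ t = outflow (t ∘ dartEdge) := by
  funext v
  simp only [mulVec, dotProduct, outflow, Function.comp_apply]
  have himage : ({d : G.Dart | d.fst = v} : Finset G.Dart).image dartEdge =
      ({e | v ∈ e.1} : Finset G.edgeSet) := by
    ext e
    simpa using exists_fst_eq_dartEdge_eq_iff
  simp only [edgeIncMatrix_apply, ite_mul, one_mul, zero_mul]
  rw [← sum_filter, ← himage, sum_image (by simpa using dartEdge_injOn_fst_eq v)]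

theorem vecMul_edgeIncMatrix_injective [Ring R] [NoZeroDivisors R] [NeZero (2 : R)]
    (hodd : ∀ v, ∃ p : G.Walk v v, Odd p.length) :
    Function.Injective (edgeIncMatrix R G).vecMul := by
  intro f g hfg
  refine sub_eq_zero.mp (eq_zero_of_adj_eq_neg hodd fun u v huv ↦ ?_)
  have hker : (f - g) ᵥ* edgeIncMatrix R G = 0 := by rw [sub_vecMul]; exact sub_eq_zero.mpr hfg
  have hsum := vecMul_edgeIncMatrix_dartEdge (f - g) ⟨(u, v), huv⟩
  rw [hker] at hsum
  exact eq_neg_of_add_eq_zero_left hsum.symm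

theorem finrank_ker_edgeIncMatrix_add_card {K : Type*} [Field K] [NeZero (2 : K)]
    (hodd : ∀ v, ∃ p : G.Walk v v, Odd p.length) :
    Module.finrank K (LinearMap.ker (edgeIncMatrix K G).mulVecLin) + Fintype.card V =
      G.edgeFinset.card := by
  have hrank : (edgeIncMatrix K G).rank = Fintype.card V :=
    (vecMul_injective_iff.mp (vecMul_edgeIncMatrix_injective hodd)).rank_matrix
  rw [← hrank, Matrix.rank, add_comm, LinearMap.finrank_range_add_finrank_ker,
    Module.finrank_fintype_fun_eq_card, SimpleGraph.edgeFinset_card]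

end IncidenceMatrix

section HashimotoMatrix

variable {V : Type*} (R : Type*) (G : SimpleGraph V) [DecidableEq V]

/-- The Hashimoto matrix of `G`: the adjacency matrix of the oriented line graph, in which a dart is
followed by the darts that leave its head without backtracking. -/
def hashimotoMatrix [Zero R] [One R] : Matrix G.Dart G.Dart R :=
  of fun d e ↦ if d.snd = e.fst ∧ d.fst ≠ e.snd then 1 else 0

variable {R G} [Fintype V] [DecidableRel G.Adj]

theorem hashimotoMatrix_mulVec_apply [NonAssocRing R] (s : G.Dart → R) (d : G.Dart) :
    (hashimotoMatrix R G *ᵥ s) d = outflow s d.snd - s d.symm := by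
  have hsucc : ({e | d.snd = e.fst ∧ d.fst ≠ e.snd} : Finset G.Dart) =
      ({e | e.fst = d.snd} : Finset G.Dart).erase d.symm := by
    ext e
    simp only [mem_filter_univ, mem_erase, ne_eq, SimpleGraph.Dart.ext_iff, Prod.ext_iff,
      SimpleGraph.Dart.symm_toProd, Prod.fst_swap, Prod.snd_swap]
    grind
  simp only [mulVec, dotProduct, hashimotoMatrix, of_apply, ite_mul, one_mul, zero_mul]
  rw [← sum_filter, hsucc, sum_erase_eq_sub (by simp), outflow]

variable [Ring R] [NoZeroDivisors R] [NeZero (2 : R)]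

theorem hashimotoMatrix_mulVec_eq_neg_iff (hodd : ∀ v, ∃ p : G.Walk v v, Odd p.length)
    {s : G.Dart → R} :
    hashimotoMatrix R G *ᵥ s = -s ↔ outflow s = 0 ∧ ∀ d, s d.symm = s d := by
  constructor
  · intro hs
    have houtflow (d : G.Dart) : outflow s d.snd = s d.symm - s d := by
      have hd : outflow s d.snd - s d.symm = -s d := by
        rw [← hashimotoMatrix_mulVec_apply, hs, Pi.neg_apply]
      rw [eq_add_of_sub_eq hd, neg_add_eq_sub]
    have hzero : outflow s = 0 := eq_zero_of_adj_eq_neg hodd fun u v huv ↦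
      calc outflow s u = s ⟨(u, v), huv⟩ - s ⟨(v, u), huv.symm⟩ := houtflow ⟨(v, u), huv.symm⟩
        _ = -(s ⟨(v, u), huv.symm⟩ - s ⟨(u, v), huv⟩) := (neg_sub _ _).symm
        _ = -outflow s v := congrArg Neg.neg (houtflow ⟨(u, v), huv⟩).symm
    exact ⟨hzero, fun d ↦ sub_eq_zero.mp (by rw [← houtflow, hzero, Pi.zero_apply])⟩
  · rintro ⟨hzero, hsymm⟩
    funext d
    simp [hashimotoMatrix_mulVec_apply, hzero, hsymm]

end HashimotoMatrix

section Eigenspace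

variable {V : Type*} {G : SimpleGraph V} [Fintype V] [DecidableEq V] [DecidableRel G.Adj]

theorem eigenspace_hashimotoMatrix_neg_one {R : Type*} [CommRing R] [NoZeroDivisors R]
    [NeZero (2 : R)] (hodd : ∀ v, ∃ p : G.Walk v v, Odd p.length) :
    Module.End.eigenspace (toLin' (hashimotoMatrix R G)) (-1) =
      (LinearMap.ker (edgeIncMatrix R G).mulVecLin).map (LinearMap.funLeft R R dartEdge) := by
  ext s
  calc s ∈ Module.End.eigenspace (toLin' (hashimotoMatrix R G)) (-1)
    _ ↔ hashimotoMatrix R G *ᵥ s = -s := by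
      rw [Module.End.mem_eigenspace_iff, toLin'_apply, neg_one_smul]
    _ ↔ outflow s = 0 ∧ ∃ t, t ∘ dartEdge = s := by
      rw [hashimotoMatrix_mulVec_eq_neg_iff hodd, exists_comp_dartEdge_eq_iff]
    _ ↔ ∃ t, edgeIncMatrix R G *ᵥ t = 0 ∧ t ∘ dartEdge = s := by
      simp only [edgeIncMatrix_mulVec]
      grind
    _ ↔ s ∈ (LinearMap.ker (edgeIncMatrix R G).mulVecLin).map (LinearMap.funLeft R R dartEdge) :=
      Iff.rfl

theorem finrank_eigenspace_hashimotoMatrix_neg_one {K : Type*} [Field K] [NeZero (2 : K)]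
    (hodd : ∀ v, ∃ p : G.Walk v v, Odd p.length) :
    Module.finrank K (Module.End.eigenspace (toLin' (hashimotoMatrix K G)) (-1)) +
      Fintype.card V = G.edgeFinset.card := by
  have hinj := LinearMap.funLeft_injective_of_surjective K K _ (dartEdge_surjective (G := G))
  rw [eigenspace_hashimotoMatrix_neg_one hodd,
    ← (Submodule.equivMapOfInjective _ hinj _).finrank_eq, finrank_ker_edgeIncMatrix_add_card hodd]

end Eigenspace

section Reindexing

theorem eigenspace_conj {R M N : Type*} [CommRing R] [AddCommGroup M] [Module R M]
    [AddCommGroup N] [Module R N] (e : M ≃ₗ[R] N) (f : Module.End R M) (μ : R) :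
    Module.End.eigenspace (e.conj f) μ = (Module.End.eigenspace f μ).map (e : M →ₗ[R] N) := by
  ext x
  rw [Submodule.mem_map_equiv, Module.End.mem_eigenspace_iff, Module.End.mem_eigenspace_iff,
    LinearEquiv.conj_apply_apply, ← LinearEquiv.eq_symm_apply, map_smul]

theorem finrank_eigenspace_toLin'_reindex {R m n : Type*} [CommRing R] [Fintype m] [DecidableEq m]
    [Fintype n] [DecidableEq n] (e : m ≃ n) (A : Matrix m m R) (μ : R) :
    Module.finrank R (Module.End.eigenspace (toLin' (reindex e e A)) μ) =
      Module.finrank R (Module.End.eigenspace (toLin' A) μ) := by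
  have hconj : toLin' (reindex e e A) = (LinearEquiv.funCongrLeft R R e.symm).conj (toLin' A) :=
    toLin'_reindex e e A
  rw [hconj, eigenspace_conj, LinearEquiv.finrank_map_eq]

/-- Darts as ordered pairs of adjacent vertices. -/
def dartEquivAdjPair {V : Type*} (G : SimpleGraph V) :
    G.Dart ≃ {p : V × V // G.Adj p.1 p.2} where
  toFun d := ⟨d.toProd, d.adj⟩
  invFun p := ⟨p.1, p.2⟩

end Reindexing

/-- The hypothesis `hodd` says that no connected component of `G` is bipartite. -/
theorem finrank_hashimoto_eigenspace_neg_one_general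
    {V K : Type*} [Fintype V] [DecidableEq V] [Field K] [NeZero (2 : K)]
    (G : SimpleGraph V) [DecidableRel G.Adj]
    (hodd : ∀ v, ∃ p : G.Walk v v, Odd p.length)
    (T : Matrix {p : V × V // G.Adj p.1 p.2} {p : V × V // G.Adj p.1 p.2} K)
    (hT : ∀ e f : {p : V × V // G.Adj p.1 p.2},
      T e f = if e.1.2 = f.1.1 ∧ e.1.1 ≠ f.1.2 then 1 else 0) :
    Module.finrank K (Module.End.eigenspace (Matrix.toLin' T) (-1)) + Fintype.card V =
      G.edgeFinset.card := by
  have hreindex : T = reindex (dartEquivAdjPair G) (dartEquivAdjPair G) (hashimotoMatrix K G) :=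
    Matrix.ext hT
  rw [hreindex, finrank_eigenspace_toLin'_reindex,
    finrank_eigenspace_hashimotoMatrix_neg_one hodd]

/-- Let `G = (V, E)` be a finite connected simple non-bipartite graph with minimum degree
at least `2` which is not a cycle (equivalently `|E| > |V|`), and let `T` be the
Hashimoto matrix (adjacency matrix of the oriented line graph, indexed by directed
edges). Then the eigenspace of `T` for the eigenvalue `-1` has dimension exactly
`|E| - |V|` (stated additively to avoid natural subtraction). -/
theorem finrank_hashimoto_eigenspace_neg_one
    {V : Type*} [Fintype V] [DecidableEq V]
    (G : SimpleGraph V) [DecidableRel G.Adj]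
    (hconn : G.Connected)
    (hdeg : ∀ v : V, 2 ≤ G.degree v)
    (hcard : Fintype.card V < G.edgeFinset.card)
    (hnonbip : ¬ ∃ X : Set V, ∀ ⦃u v : V⦄, G.Adj u v → (u ∈ X ↔ v ∉ X))
    (T : Matrix {p : V × V // G.Adj p.1 p.2} {p : V × V // G.Adj p.1 p.2} ℝ)
    (hT : ∀ e f : {p : V × V // G.Adj p.1 p.2},
      T e f = if e.1.2 = f.1.1 ∧ e.1.1 ≠ f.1.2 then 1 else 0) :
    Module.finrank ℝ (Module.End.eigenspace (Matrix.toLin' T) (-1)) + Fintype.card V =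
      G.edgeFinset.card := by
  have hodd := exists_odd_closed_walk hconn.preconnected
    (mt exists_adj_mem_iff_notMem_of_isBipartite hnonbip)
  exact finrank_hashimoto_eigenspace_neg_one_general G hodd T hT
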